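/- Let H be a weak Hopf algebra over a field k. Then for all x ∈ H, Σ ε_s(x⁽²⁾) ⊗ S(x⁽¹⁾)x⁽³⁾ = Δ(ε_s(x)) in H⊗H, and for every h ∈ H_s and every y ∈ H, Σ ε(hy⁽²⁾)·y⁽¹⁾S(y⁽³⁾) = h·ε_t(y). -/

import Mathlib

/-!
The proof rests on two facts about the source counital map of a weak bialgebra, both consequences
of the second form of (WBA3), `1⁽¹⁾ ⊗ 1⁽²⁾ ⊗ 1⁽³⁾ = (1 ⊗ Δ(1))(Δ(1) ⊗ 1)`:

* `comul_εs`: `Δ(ε_s(x)) = (1 ⊗ ε_s(x))Δ(1)`;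
* `map_εs_comul`: `Σ ε_s(x⁽¹⁾) ⊗ x⁽²⁾ = (1 ⊗ x)Δ(1)`.

The second one turns `Σ ε_s(x⁽²⁾) ⊗ S(x⁽¹⁾)x⁽³⁾` into
`Σ (1 ⊗ S(x⁽¹⁾)x⁽²⁾)Δ(1) = (1 ⊗ ε_s(x))Δ(1)`, which is `Δ(ε_s(x))` by the first one.

The first one gives `Δ(hy) = (1 ⊗ h)Δ(y)` for `h ∈ H_s`, hence `Σ y⁽¹⁾ε(hy⁽²⁾) = hy`. Therefore
`Σ ε(hy⁽²⁾)y⁽¹⁾S(y⁽³⁾) = Σ hy⁽¹⁾S(y⁽²⁾) = hε_t(y)`.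

Each Sweedler computation is carried out by replacing the occurrences of `Δ(1)`, `Δ(x)` by
arbitrary tensors, and checking the resulting multilinear identity on pure tensors.
-/

open scoped TensorProduct
open TensorProduct LinearMap

/-- A weak bialgebra over a field `k`: an algebra and coalgebra subject to the
weak compatibility axioms (WBA1)-(WBA3). -/
class WeakBialgebra (k H : Type*) [Field k] [Ring H] [Algebra k H]
    extends Coalgebra k H where
  /-- (WBA1): `Δ(xy) = Δ(x)Δ(y)`. -/
  comul_mul : ∀ x y : H,
    Coalgebra.comul (R := k) (x * y) = Coalgebra.comul (R := k) x * Coalgebra.comul (R := k) y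
  /-- (WBA2): `ε(xyz) = Σ ε(xy⁽¹⁾)ε(y⁽²⁾z)`. -/
  counit_mul_mul : ∀ x y z : H,
    Coalgebra.counit (R := k) (x * y * z) =
      TensorProduct.lid k k
        ((TensorProduct.map (Coalgebra.counit ∘ₗ LinearMap.mulLeft k x)
            (Coalgebra.counit ∘ₗ LinearMap.mulRight k z))
          (Coalgebra.comul (R := k) y))
  /-- (WBA2'): `ε(xyz) = Σ ε(xy⁽²⁾)ε(y⁽¹⁾z)`. -/
  counit_mul_mul' : ∀ x y z : H,
    Coalgebra.counit (R := k) (x * y * z) =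
      TensorProduct.lid k k
        ((TensorProduct.map (Coalgebra.counit ∘ₗ LinearMap.mulRight k z)
            (Coalgebra.counit ∘ₗ LinearMap.mulLeft k x))
          (Coalgebra.comul (R := k) y))
  /-- (WBA3): `((Δ⊗id)∘Δ)(1) = (Δ(1)⊗1)·(1⊗Δ(1))`. -/
  comul_comul_one :
    (TensorProduct.map (Coalgebra.comul (R := k)) (LinearMap.id (M := H)))
        (Coalgebra.comul (R := k) (1 : H)) =
      (Coalgebra.comul (R := k) (1 : H) ⊗ₜ[k] (1 : H)) *
        ((TensorProduct.assoc k H H H).symm ((1 : H) ⊗ₜ[k] Coalgebra.comul (R := k) (1 : H)))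
  /-- (WBA3'): `((Δ⊗id)∘Δ)(1) = (1⊗Δ(1))·(Δ(1)⊗1)`. -/
  comul_comul_one' :
    (TensorProduct.map (Coalgebra.comul (R := k)) (LinearMap.id (M := H)))
        (Coalgebra.comul (R := k) (1 : H)) =
      ((TensorProduct.assoc k H H H).symm ((1 : H) ⊗ₜ[k] Coalgebra.comul (R := k) (1 : H))) *
        (Coalgebra.comul (R := k) (1 : H) ⊗ₜ[k] (1 : H))

variable (k H : Type*) [Field k] [Ring H] [Algebra k H]

/-- The target counital map `ε_t(x) = Σ ε(1⁽¹⁾x)·1⁽²⁾`. -/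
noncomputable def εt [WeakBialgebra k H] : H →ₗ[k] H :=
  (TensorProduct.lid k H).toLinearMap ∘ₗ
    (LinearMap.rTensor H (Coalgebra.counit (R := k) (A := H))) ∘ₗ
    (LinearMap.mulLeft k (Coalgebra.comul (R := k) (1 : H))) ∘ₗ
    ((TensorProduct.mk k H H).flip 1)

/-- The source counital map `ε_s(x) = Σ 1⁽¹⁾·ε(x1⁽²⁾)`. -/
noncomputable def εs [WeakBialgebra k H] : H →ₗ[k] H :=
  (TensorProduct.rid k H).toLinearMap ∘ₗ
    (LinearMap.lTensor H (Coalgebra.counit (R := k) (A := H))) ∘ₗ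
    (LinearMap.mulRight k (Coalgebra.comul (R := k) (1 : H))) ∘ₗ
    (TensorProduct.mk k H H 1)

/-- The target base algebra `H_t = ε_t(H)`. -/
noncomputable def Ht [WeakBialgebra k H] : Submodule k H := LinearMap.range (εt k H)

/-- The source base algebra `H_s = ε_s(H)`. -/
noncomputable def Hs [WeakBialgebra k H] : Submodule k H := LinearMap.range (εs k H)

/-- A weak Hopf algebra: a weak bialgebra with an antipode `S` satisfying
`Σ x⁽¹⁾S(x⁽²⁾) = ε_t(x)`, `Σ S(x⁽¹⁾)x⁽²⁾ = ε_s(x)` and `Σ S(x⁽¹⁾)x⁽²⁾S(x⁽³⁾) = S(x)`. -/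
class WeakHopfAlgebra extends WeakBialgebra k H where
  antipode : H →ₗ[k] H
  mul_antipode : ∀ x : H,
    LinearMap.mul' k H ((LinearMap.lTensor H antipode) (Coalgebra.comul (R := k) x)) = εt k H x
  antipode_mul : ∀ x : H,
    LinearMap.mul' k H ((LinearMap.rTensor H antipode) (Coalgebra.comul (R := k) x)) = εs k H x
  antipode_mul_antipode : ∀ x : H,
    LinearMap.mul' k H
      ((TensorProduct.map antipode (LinearMap.mul' k H ∘ₗ LinearMap.lTensor H antipode))
        ((LinearMap.lTensor H (Coalgebra.comul (R := k)))
          (Coalgebra.comul (R := k) x))) = antipode x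

/-- The antipode of a weak Hopf algebra, as a linear map. -/
noncomputable def aS [WeakHopfAlgebra k H] : H →ₗ[k] H :=
  WeakHopfAlgebra.antipode (k := k) (H := H)

section WeakBialgebraLemmas

variable [WeakBialgebra k H]

lemma comul_mul_comul_one (x : H) :
    Coalgebra.comul (R := k) x * Coalgebra.comul (R := k) (1 : H) = Coalgebra.comul (R := k) x := by
  rw [← WeakBialgebra.comul_mul, mul_one]

lemma comul_one_mul_comul (x : H) :
    Coalgebra.comul (R := k) (1 : H) * Coalgebra.comul (R := k) x = Coalgebra.comul (R := k) x := by
  rw [← WeakBialgebra.comul_mul, one_mul]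

/-- `Δ(ε_s(x)) = (1 ⊗ ε_s(x))Δ(1)`, obtained by applying `a ⊗ b ⊗ c ↦ a ⊗ ε(xc)b` to (WBA3). -/
lemma comul_εs (x : H) :
    Coalgebra.comul (R := k) (εs k H x) =
      ((1 : H) ⊗ₜ[k] εs k H x) * Coalgebra.comul (R := k) (1 : H) := by
  let F : (H ⊗[k] H) ⊗[k] H →ₗ[k] H ⊗[k] H :=
    (TensorProduct.rid k (H ⊗[k] H)).toLinearMap ∘ₗ
      LinearMap.lTensor (H ⊗[k] H) (Coalgebra.counit (R := k) (A := H) ∘ₗ LinearMap.mulLeft k x)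
  have h1 : ∀ t : H ⊗[k] H,
      F (TensorProduct.map (Coalgebra.comul (R := k)) (LinearMap.id (M := H)) t) =
        Coalgebra.comul (R := k) (TensorProduct.rid k H
          (LinearMap.lTensor H (Coalgebra.counit (R := k) (A := H)) (((1 : H) ⊗ₜ[k] x) * t))) := by
    intro t
    induction t with
    | zero => simp
    | add a b ha hb => simp only [map_add, mul_add, ha, hb]
    | tmul a b => simp [F]
  have h2 : ∀ s t : H ⊗[k] H,
      F ((TensorProduct.assoc k H H H).symm ((1 : H) ⊗ₜ[k] s) * (t ⊗ₜ[k] (1 : H))) =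
        ((1 : H) ⊗ₜ[k] (TensorProduct.rid k H
          (LinearMap.lTensor H (Coalgebra.counit (R := k) (A := H))
            (((1 : H) ⊗ₜ[k] x) * s)))) * t := by
    intro s t
    induction s with
    | zero => simp
    | add a b ha hb => simp only [map_add, mul_add, add_mul, tmul_add, ha, hb]
    | tmul p q =>
      induction t with
      | zero => simp
      | add a b ha hb => simp only [map_add, mul_add, add_tmul, ha, hb]
      | tmul a b => simp [F]
  have h3 := congrArg F (WeakBialgebra.comul_comul_one' (k := k) (H := H))
  rw [h1, h2] at h3
  exact h3

/-- `Σ ε_s(x⁽¹⁾) ⊗ x⁽²⁾ = (1 ⊗ x)Δ(1)`, obtained by applying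
`a ⊗ b ⊗ c ↦ Σ a ⊗ ε(x⁽¹⁾b)x⁽²⁾c` to (WBA3). -/
lemma map_εs_comul (x : H) :
    LinearMap.rTensor H (εs k H) (Coalgebra.comul (R := k) x) =
      ((1 : H) ⊗ₜ[k] x) * Coalgebra.comul (R := k) (1 : H) := by
  let E : H ⊗[k] H →ₗ[k] H :=
    (TensorProduct.lid k H).toLinearMap ∘ₗ LinearMap.rTensor H (Coalgebra.counit (R := k) (A := H))
  let G : H ⊗[k] H → (H ⊗[k] H) ⊗[k] H →ₗ[k] H ⊗[k] H := fun u =>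
    LinearMap.lTensor H (E ∘ₗ LinearMap.mulLeft k u) ∘ₗ (TensorProduct.assoc k H H H).toLinearMap
  have hE : ∀ y : H, E (Coalgebra.comul (R := k) y) = y := fun y => by simp [E]
  have h1 : ∀ t : H ⊗[k] H,
      G (Coalgebra.comul (R := k) x) ((TensorProduct.assoc k H H H).symm
        (LinearMap.lTensor H (Coalgebra.comul (R := k)) t)) = ((1 : H) ⊗ₜ[k] x) * t := by
    intro t
    induction t with
    | zero => simp
    | add a b ha hb => simp only [map_add, mul_add, ha, hb]
    | tmul a b => simp [G, ← WeakBialgebra.comul_mul, hE]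
  have h2 : ∀ u s t : H ⊗[k] H,
      G u ((TensorProduct.assoc k H H H).symm ((1 : H) ⊗ₜ[k] s) * (t ⊗ₜ[k] (1 : H))) =
        G (u * s) (t ⊗ₜ[k] (1 : H)) := by
    intro u s t
    induction t with
    | zero => simp
    | add a b ha hb => simp only [map_add, mul_add, add_tmul, ha, hb]
    | tmul a b =>
      induction s with
      | zero => simp [G]
      | add p q hp hq =>
        simp only [map_add, add_mul, tmul_add, hp, hq]
        simp [G, mul_add, add_mul, tmul_add, mul_assoc]
      | tmul p q => simp [G]
  have h3 : ∀ u t : H ⊗[k] H, G u (t ⊗ₜ[k] (1 : H)) =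
      LinearMap.rTensor H ((TensorProduct.rid k H).toLinearMap ∘ₗ
        LinearMap.lTensor H (Coalgebra.counit (R := k) (A := H)) ∘ₗ
        LinearMap.mulRight k t ∘ₗ TensorProduct.mk k H H 1) u := by
    intro u t
    induction t with
    | zero => simp
    | add a b ha hb =>
      rw [add_tmul, map_add, ha, hb, ← LinearMap.add_apply, ← LinearMap.rTensor_add]
      congr 2
      ext p
      simp [mul_add]
    | tmul a b =>
      induction u with
      | zero => simp [G]
      | add p q hp hq =>
        rw [map_add, ← hp, ← hq]
        simp [G, add_mul, tmul_add]
      | tmul p q => simp [G, E, smul_tmul]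
  have h4 : TensorProduct.map (Coalgebra.comul (R := k)) (LinearMap.id (M := H))
        (Coalgebra.comul (R := k) (1 : H)) = (TensorProduct.assoc k H H H).symm
        (LinearMap.lTensor H (Coalgebra.comul (R := k)) (Coalgebra.comul (R := k) (1 : H))) :=
    (Coalgebra.coassoc_symm_apply (R := k) (1 : H)).symm
  have h5 := congrArg (G (Coalgebra.comul (R := k) x))
    (WeakBialgebra.comul_comul_one' (k := k) (H := H))
  rw [h4, h1, h2, comul_mul_comul_one, h3] at h5
  exact h5.symm

/-- Elements of `H_s` satisfy `Σ y⁽¹⁾ε(hy⁽²⁾) = hy`, because `Δ(hy) = (1 ⊗ h)Δ(y)`. -/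
lemma rid_lTensor_counit_mulLeft (h : H) (hh : h ∈ Hs k H) (y : H) :
    TensorProduct.rid k H (LinearMap.lTensor H
      ((Coalgebra.counit (R := k) (A := H)) ∘ₗ LinearMap.mulLeft k h)
        (Coalgebra.comul (R := k) y)) = h * y := by
  obtain ⟨x, rfl⟩ := hh
  have h1 : ∀ u : H ⊗[k] H, LinearMap.lTensor H
      ((Coalgebra.counit (R := k) (A := H)) ∘ₗ LinearMap.mulLeft k (εs k H x)) u =
      LinearMap.lTensor H (Coalgebra.counit (R := k) (A := H))
        (((1 : H) ⊗ₜ[k] εs k H x) * u) := by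
    intro u
    induction u with
    | zero => simp
    | add a b ha hb => simp only [map_add, mul_add, ha, hb]
    | tmul a b => simp
  rw [h1, ← comul_one_mul_comul, ← mul_assoc, ← comul_εs, ← WeakBialgebra.comul_mul]
  simp

end WeakBialgebraLemmas

/-- In a weak Hopf algebra over a field:
`Σ ε_s(x⁽²⁾) ⊗ S(x⁽¹⁾)x⁽³⁾ = Δ(ε_s(x))`, and for `h ∈ H_s`,
`Σ ε(hy⁽²⁾)·y⁽¹⁾S(y⁽³⁾) = h·ε_t(y)`. -/
theorem antipode_source_identities [WeakHopfAlgebra k H] :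
    (∀ x : H,
      (TensorProduct.map (εs k H)
          (LinearMap.mul' k H ∘ₗ LinearMap.rTensor H (aS k H) ∘ₗ
            (TensorProduct.comm k H H).toLinearMap))
        ((TensorProduct.assoc k H H H)
          ((TensorProduct.comm k H (H ⊗[k] H))
            ((LinearMap.lTensor H (Coalgebra.comul (R := k) (A := H)))
              (Coalgebra.comul (R := k) x)))) =
      Coalgebra.comul (R := k) (εs k H x)) ∧
    (∀ h ∈ Hs k H, ∀ y : H,
      LinearMap.mul' k H
        ((LinearMap.lTensor H
            ((TensorProduct.lid k H).toLinearMap ∘ₗ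
              TensorProduct.map ((Coalgebra.counit (R := k) (A := H)) ∘ₗ LinearMap.mulLeft k h)
                (aS k H)))
          ((LinearMap.lTensor H (Coalgebra.comul (R := k) (A := H)))
            (Coalgebra.comul (R := k) y))) =
      h * εt k H y) := by
  constructor
  · intro x
    -- Evaluation of the left-hand side with `x⁽²⁾ ⊗ x⁽³⁾` replaced by an arbitrary tensor `v`.
    have h1 : ∀ (a : H) (v : H ⊗[k] H),
        (TensorProduct.map (εs k H)
          (LinearMap.mul' k H ∘ₗ LinearMap.rTensor H (aS k H) ∘ₗ
            (TensorProduct.comm k H H).toLinearMap))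
          ((TensorProduct.assoc k H H H) ((TensorProduct.comm k H (H ⊗[k] H)) (a ⊗ₜ[k] v))) =
        ((1 : H) ⊗ₜ[k] aS k H a) * LinearMap.rTensor H (εs k H) v := by
      intro a v
      induction v with
      | zero => simp
      | add p q hp hq => simp only [map_add, mul_add, tmul_add, hp, hq]
      | tmul p q => simp
    have h2 : ∀ t : H ⊗[k] H,
        (TensorProduct.map (εs k H)
          (LinearMap.mul' k H ∘ₗ LinearMap.rTensor H (aS k H) ∘ₗ
            (TensorProduct.comm k H H).toLinearMap))
          ((TensorProduct.assoc k H H H) ((TensorProduct.comm k H (H ⊗[k] H))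
            (LinearMap.lTensor H (Coalgebra.comul (R := k) (A := H)) t))) =
        ((1 : H) ⊗ₜ[k] LinearMap.mul' k H (LinearMap.rTensor H (aS k H) t)) *
          Coalgebra.comul (R := k) (1 : H) := by
      intro t
      induction t with
      | zero => simp
      | add p q hp hq => simp only [map_add, add_mul, tmul_add, hp, hq]
      | tmul p q =>
        rw [LinearMap.lTensor_tmul, h1, map_εs_comul, ← mul_assoc]
        simp
    rw [h2, comul_εs]
    congr 2
    exact WeakHopfAlgebra.antipode_mul x
  · intro h hh y
    rw [← Coalgebra.coassoc_apply]
    -- Evaluation of the left-hand side with `y⁽¹⁾ ⊗ y⁽²⁾` replaced by an arbitrary tensor `u`.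
    have h1 : ∀ (u : H ⊗[k] H) (c : H),
        LinearMap.mul' k H (LinearMap.lTensor H ((TensorProduct.lid k H).toLinearMap ∘ₗ
          TensorProduct.map ((Coalgebra.counit (R := k) (A := H)) ∘ₗ LinearMap.mulLeft k h)
            (aS k H)) ((TensorProduct.assoc k H H H) (u ⊗ₜ[k] c))) =
        TensorProduct.rid k H (LinearMap.lTensor H
          ((Coalgebra.counit (R := k) (A := H)) ∘ₗ LinearMap.mulLeft k h) u) * aS k H c := by
      intro u c
      induction u with
      | zero => simp
      | add p q hp hq => simp only [map_add, add_mul, add_tmul, hp, hq]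
      | tmul p q => simp
    have h2 : ∀ t : H ⊗[k] H,
        LinearMap.mul' k H (LinearMap.lTensor H ((TensorProduct.lid k H).toLinearMap ∘ₗ
          TensorProduct.map ((Coalgebra.counit (R := k) (A := H)) ∘ₗ LinearMap.mulLeft k h)
            (aS k H)) ((TensorProduct.assoc k H H H)
              (LinearMap.rTensor H (Coalgebra.comul (R := k) (A := H)) t))) =
        h * LinearMap.mul' k H (LinearMap.lTensor H (aS k H) t) := by
      intro t
      induction t with
      | zero => simp
      | add p q hp hq => simp only [map_add, mul_add, hp, hq]
      | tmul p q =>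
        rw [LinearMap.rTensor_tmul, h1, rid_lTensor_counit_mulLeft k H h hh]
        simp [mul_assoc]
    rw [h2]
    congr 1
    exact WeakHopfAlgebra.mul_antipode y
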